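/- There is a ℂ-algebra homomorphism μ_q: 𝒪q(GL₂) → 𝒟q(GL₂), the quantum moment map, determined by sending each generator ℓ^i_j to the (i,j)-entry of the matrix D·A⁻¹·D⁻¹·A in the 2×2 matrices over 𝒟q(GL₂), where A⁻¹ = det_q(A)⁻¹Ã and D⁻¹ = det_q(D)⁻¹D̃. -/

import Mathlib

noncomputable section

/-- Generators `a¹₁, a¹₂, a²₁, a²₂, ∂¹₁, ∂¹₂, ∂²₁, ∂²₂` of the algebra
`𝒟q⁺(GL₂)` of quantum differential operators. -/
inductive QLGen : Type
  | a11 | a12 | a21 | a22 | p11 | p12 | p21 | p22 | ai | di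

abbrev FQL : Type := FreeAlgebra ℂ QLGen

def gQL : QLGen → FQL := FreeAlgebra.ι ℂ

/-- The defining relations of `𝒟q⁺(GL₂)`. -/
inductive QLRel (q : ℂ) : FQL → FQL → Prop
  -- the six `a`-relations
  | a1 : QLRel q (gQL .a12 * gQL .a11)
      (gQL .a11 * gQL .a12 + (1 - q⁻¹ ^ 2) • (gQL .a12 * gQL .a22))
  | a2 : QLRel q (gQL .a22 * gQL .a11) (gQL .a11 * gQL .a22)
  | a3 : QLRel q (gQL .a21 * gQL .a11)
      (gQL .a11 * gQL .a21 - (1 - q⁻¹ ^ 2) • (gQL .a22 * gQL .a21))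
  | a4 : QLRel q (gQL .a22 * gQL .a12) ((q ^ 2) • (gQL .a12 * gQL .a22))
  | a5 : QLRel q (gQL .a21 * gQL .a12)
      (gQL .a12 * gQL .a21 + (1 - q⁻¹ ^ 2) • (gQL .a11 * gQL .a22 - gQL .a22 * gQL .a22))
  | a6 : QLRel q (gQL .a22 * gQL .a21) ((q⁻¹ ^ 2) • (gQL .a21 * gQL .a22))
  -- the six `∂`-relations
  | p1 : QLRel q (gQL .p12 * gQL .p11)
      (gQL .p11 * gQL .p12 + (1 - q⁻¹ ^ 2) • (gQL .p12 * gQL .p22))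
  | p2 : QLRel q (gQL .p22 * gQL .p11) (gQL .p11 * gQL .p22)
  | p3 : QLRel q (gQL .p21 * gQL .p11)
      (gQL .p11 * gQL .p21 - (1 - q⁻¹ ^ 2) • (gQL .p22 * gQL .p21))
  | p4 : QLRel q (gQL .p22 * gQL .p12) ((q ^ 2) • (gQL .p12 * gQL .p22))
  | p5 : QLRel q (gQL .p21 * gQL .p12)
      (gQL .p12 * gQL .p21 + (1 - q⁻¹ ^ 2) • (gQL .p11 * gQL .p22 - gQL .p22 * gQL .p22))
  | p6 : QLRel q (gQL .p22 * gQL .p21) ((q⁻¹ ^ 2) • (gQL .p21 * gQL .p22))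
  -- the sixteen cross relations
  | c1 : QLRel q (gQL .p11 * gQL .a11)
      (-((1 - q⁻¹ ^ 2) • (gQL .p12 * gQL .a21)) + (q⁻¹ ^ 2) • (gQL .a11 * gQL .p11)
        + (q⁻¹ ^ 2 - q⁻¹ ^ 4) • (gQL .a12 * gQL .p21))
  | c2 : QLRel q (gQL .p11 * gQL .a12)
      ((q⁻¹ ^ 2 - 1) • (gQL .p12 * gQL .a22) + (q⁻¹ ^ 2) • (gQL .a12 * gQL .p11))
  | c3 : QLRel q (gQL .p11 * gQL .a21)
      ((1 - q ^ 2) • (gQL .p21 * gQL .a11) - ((q - q⁻¹) ^ 2) • (gQL .p22 * gQL .a21)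
        + gQL .a21 * gQL .p11 + (1 - q⁻¹ ^ 2) • (gQL .a22 * gQL .p21))
  | c4 : QLRel q (gQL .p11 * gQL .a22)
      ((1 - q ^ 2) • (gQL .p21 * gQL .a12) - ((q - q⁻¹) ^ 2) • (gQL .p22 * gQL .a22)
        + gQL .a22 * gQL .p11)
  | c5 : QLRel q (gQL .p12 * gQL .a11)
      (gQL .a11 * gQL .p12 + (1 - q⁻¹ ^ 2) • (gQL .a12 * gQL .p22)
        + (q⁻¹ ^ 2 - 1) • (gQL .a12 * gQL .p11))
  | c6 : QLRel q (gQL .p12 * gQL .a12) ((q⁻¹ ^ 2) • (gQL .a12 * gQL .p12))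
  | c7 : QLRel q (gQL .p12 * gQL .a21)
      ((q⁻¹ ^ 2 - 1) • (gQL .p22 * gQL .a11) + gQL .a21 * gQL .p12
        + (q⁻¹ ^ 2 - 1) • (gQL .a22 * gQL .p11) + (1 - q⁻¹ ^ 2) • (gQL .a22 * gQL .p22))
  | c8 : QLRel q (gQL .p12 * gQL .a22)
      ((q⁻¹ ^ 2 - 1) • (gQL .p22 * gQL .a12) + (q⁻¹ ^ 2) • (gQL .a22 * gQL .p12))
  | c9 : QLRel q (gQL .p21 * gQL .a11)
      ((q⁻¹ ^ 2) • (gQL .a11 * gQL .p21) - (1 - q⁻¹ ^ 2) • (gQL .p22 * gQL .a21))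
  | c10 : QLRel q (gQL .p21 * gQL .a12)
      ((q⁻¹ ^ 2 - 1) • (gQL .p22 * gQL .a22) + gQL .a12 * gQL .p21)
  | c11 : QLRel q (gQL .p21 * gQL .a21) ((q⁻¹ ^ 2) • (gQL .a21 * gQL .p21))
  | c12 : QLRel q (gQL .p21 * gQL .a22) (gQL .a22 * gQL .p21)
  | c13 : QLRel q (gQL .p22 * gQL .a11)
      (gQL .a11 * gQL .p22 + (1 - q ^ 2) • (gQL .a12 * gQL .p21))
  | c14 : QLRel q (gQL .p22 * gQL .a12) (gQL .a12 * gQL .p22)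
  | c15 : QLRel q (gQL .p22 * gQL .a21)
      ((q⁻¹ ^ 2) • (gQL .a21 * gQL .p22) + (q⁻¹ ^ 2 - 1) • (gQL .a22 * gQL .p21))
  | c16 : QLRel q (gQL .p22 * gQL .a22) ((q⁻¹ ^ 2) • (gQL .a22 * gQL .p22))

  -- the localization relations: `ai` and `di` are two-sided inverses of
  -- `det_q(A)` and `det_q(D)` respectively
  | invA1 : QLRel q (gQL .ai * (gQL .a11 * gQL .a22 - (q ^ 2) • (gQL .a12 * gQL .a21))) 1
  | invA2 : QLRel q ((gQL .a11 * gQL .a22 - (q ^ 2) • (gQL .a12 * gQL .a21)) * gQL .ai) 1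
  | invD1 : QLRel q (gQL .di * (gQL .p11 * gQL .p22 - (q ^ 2) • (gQL .p12 * gQL .p21))) 1
  | invD2 : QLRel q ((gQL .p11 * gQL .p22 - (q ^ 2) • (gQL .p12 * gQL .p21)) * gQL .di) 1

/-- The algebra `𝒟q⁺(GL₂)` of quantum differential operators on `GL₂`. -/
abbrev DqLoc (q : ℂ) : Type := RingQuot (QLRel q)

def a11 (q : ℂ) : DqLoc q := RingQuot.mkAlgHom ℂ (QLRel q) (gQL .a11)
def a12 (q : ℂ) : DqLoc q := RingQuot.mkAlgHom ℂ (QLRel q) (gQL .a12)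
def a21 (q : ℂ) : DqLoc q := RingQuot.mkAlgHom ℂ (QLRel q) (gQL .a21)
def a22 (q : ℂ) : DqLoc q := RingQuot.mkAlgHom ℂ (QLRel q) (gQL .a22)
def p11 (q : ℂ) : DqLoc q := RingQuot.mkAlgHom ℂ (QLRel q) (gQL .p11)
def p12 (q : ℂ) : DqLoc q := RingQuot.mkAlgHom ℂ (QLRel q) (gQL .p12)
def p21 (q : ℂ) : DqLoc q := RingQuot.mkAlgHom ℂ (QLRel q) (gQL .p21)
def p22 (q : ℂ) : DqLoc q := RingQuot.mkAlgHom ℂ (QLRel q) (gQL .p22)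

/-- The quantum determinant `det_q(A) = a¹₁a²₂ − q²a¹₂a²₁`. -/
def detA (q : ℂ) : DqLoc q := a11 q * a22 q - (q ^ 2) • (a12 q * a21 q)

/-- The quantum determinant `det_q(D) = ∂¹₁∂²₂ − q²∂¹₂∂²₁`. -/
def detD (q : ℂ) : DqLoc q := p11 q * p22 q - (q ^ 2) • (p12 q * p21 q)

/-- The inverse `det_q(A)⁻¹`. -/
def ai (q : ℂ) : DqLoc q := RingQuot.mkAlgHom ℂ (QLRel q) (gQL .ai)

/-- The inverse `det_q(D)⁻¹`. -/
def di (q : ℂ) : DqLoc q := RingQuot.mkAlgHom ℂ (QLRel q) (gQL .di)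

/-- The matrix `A = (a^i_j)`. -/
def Amat (q : ℂ) : Matrix (Fin 2) (Fin 2) (DqLoc q) :=
  !![a11 q, a12 q; a21 q, a22 q]

/-- The matrix `D = (∂^i_j)`. -/
def Dmat (q : ℂ) : Matrix (Fin 2) (Fin 2) (DqLoc q) :=
  !![p11 q, p12 q; p21 q, p22 q]

/-- The quantum adjugate matrix `Ã = [[a²₂, −q²a¹₂], [−q²a²₁, q²a¹₁ + (1−q²)a²₂]]`. -/
def Atil (q : ℂ) : Matrix (Fin 2) (Fin 2) (DqLoc q) :=
  !![a22 q, -((q ^ 2) • a12 q); -((q ^ 2) • a21 q), (q ^ 2) • a11 q + (1 - q ^ 2) • a22 q]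

/-- The quantum adjugate matrix `D̃ = [[∂²₂, −q²∂¹₂], [−q²∂²₁, q²∂¹₁ + (1−q²)∂²₂]]`. -/
def Dtil (q : ℂ) : Matrix (Fin 2) (Fin 2) (DqLoc q) :=
  !![p22 q, -((q ^ 2) • p12 q); -((q ^ 2) • p21 q), (q ^ 2) • p11 q + (1 - q ^ 2) • p22 q]

/-- The inverse matrix `A⁻¹ = det_q(A)⁻¹·Ã`. -/
def Ainv (q : ℂ) : Matrix (Fin 2) (Fin 2) (DqLoc q) := fun i j => ai q * Atil q i j

/-- The inverse matrix `D⁻¹ = det_q(D)⁻¹·D̃`. -/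
def Dinv (q : ℂ) : Matrix (Fin 2) (Fin 2) (DqLoc q) := fun i j => di q * Dtil q i j

/-- Generators `ℓ¹₁, ℓ¹₂, ℓ²₁, ℓ²₂` of `𝒪q⁺(GL₂)`, together with the inverse `li`
of the (central) quantum determinant. -/
inductive OGen : Type
  | l11 | l12 | l21 | l22 | li

abbrev FO : Type := FreeAlgebra ℂ OGen

def gO : OGen → FO := FreeAlgebra.ι ℂ

/-- The defining relations of `𝒪q(GL₂)`, the localization of `𝒪q⁺(GL₂)` at the
central quantum determinant `det_q(L) = ℓ¹₁ℓ²₂ − q²ℓ¹₂ℓ²₁`. -/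
inductive ORel (q : ℂ) : FO → FO → Prop
  | r1 : ORel q (gO .l12 * gO .l11)
      (gO .l11 * gO .l12 + (1 - q⁻¹ ^ 2) • (gO .l12 * gO .l22))
  | r2 : ORel q (gO .l22 * gO .l11) (gO .l11 * gO .l22)
  | r3 : ORel q (gO .l21 * gO .l11)
      (gO .l11 * gO .l21 - (1 - q⁻¹ ^ 2) • (gO .l22 * gO .l21))
  | r4 : ORel q (gO .l22 * gO .l12) ((q ^ 2) • (gO .l12 * gO .l22))
  | r5 : ORel q (gO .l21 * gO .l12)
      (gO .l12 * gO .l21 + (1 - q⁻¹ ^ 2) • (gO .l11 * gO .l22 - gO .l22 * gO .l22))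
  | r6 : ORel q (gO .l22 * gO .l21) ((q⁻¹ ^ 2) • (gO .l21 * gO .l22))
  | inv1 : ORel q (gO .li * (gO .l11 * gO .l22 - (q ^ 2) • (gO .l12 * gO .l21))) 1
  | inv2 : ORel q ((gO .l11 * gO .l22 - (q ^ 2) • (gO .l12 * gO .l21)) * gO .li) 1

/-- The quantum coordinate algebra `𝒪q(GL₂)`. -/
abbrev OqGL2 (q : ℂ) : Type := RingQuot (ORel q)

/-- The matrix `L = (ℓ^i_j)` of generators of `𝒪q(GL₂)`. -/
def Lmat (q : ℂ) : Matrix (Fin 2) (Fin 2) (OqGL2 q) :=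
  !![RingQuot.mkAlgHom ℂ (ORel q) (gO .l11), RingQuot.mkAlgHom ℂ (ORel q) (gO .l12);
     RingQuot.mkAlgHom ℂ (ORel q) (gO .l21), RingQuot.mkAlgHom ℂ (ORel q) (gO .l22)]

/-!
Let `T` be the Hecke braiding of `R² ⊗ R²` and write `X` also for `X ⊗ 1`. The quadratic relations
of `𝒪q⁺(GL₂)` for the entries of `X` say that `X` commutes with `T X T`, and the cross relations
of `𝒟q⁺(GL₂)` imply `T D T A T = A T D`. Given these relations for invertible `D` and `A`, the
matrix `(A⁻¹ D A)⁻¹ = A⁻¹ D⁻¹ A` solves the reflection equation as `D` does, and `T D T⁻¹` commutes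
with `A⁻¹ D A`; the last fact is exactly what makes the product `D A⁻¹ D⁻¹ A` a solution again.

It remains to see that the quantum determinant of this matrix is invertible. A matrix commuting with
`T` acts on the `q`-antisymmetric vector by a scalar, multiplicatively, so invertible matrices act
by units. For a solution `X` of the reflection equation, `X (T X T)` commutes with `T`, and its
scalar is `q⁻²` times the quantum determinant of `X`.
-/

/-- The reflection equation `X T X T = T X T X` for `X` relative to an element `T`, written as the
commutation of `X` with `T X T`. -/
def ReflectionEquation {M : Type*} [Monoid M] (T X : M) : Prop :=
  Commute X (T * X * T)

/-- The exchange relation `T D T A T = A T D` between a matrix `D` of differential operators and a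
matrix `A` of coordinates, relative to an element `T`. -/
def CrossEquation {M : Type*} [Monoid M] (T D A : M) : Prop :=
  T * D * T * A * T = A * T * D

lemma ReflectionEquation.commute_mul {M : Type*} [Monoid M] {T X : M}
    (h : ReflectionEquation T X) : Commute T (X * (T * X * T)) := by
  calc T * (X * (T * X * T)) = T * X * T * X * T := by simp only [mul_assoc]
    _ = X * (T * X * T) * T := by rw [h.eq]

section Group

variable {G : Type*} [Group G] {T X Y D A : G}

lemma ReflectionEquation.inv (h : ReflectionEquation T X) : ReflectionEquation T⁻¹ X⁻¹ := by
  simpa only [ReflectionEquation, mul_inv_rev, mul_assoc] using h.inv_inv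

lemma ReflectionEquation.mul (hX : ReflectionEquation T X) (hY : ReflectionEquation T Y)
    (hXY : Commute (T * X * T⁻¹) Y) : ReflectionEquation T (X * Y) := by
  have hX' : Commute X (T⁻¹ * Y * T) := by
    rw [← Commute.conj_iff T]
    simpa only [mul_assoc, mul_inv_cancel_left, mul_inv_cancel, mul_one] using hXY
  refine Commute.mul_left ?_ ?_
  · have : T * (X * Y) * T = T * X * T * (T⁻¹ * Y * T) := by group
    exact this ▸ hX.mul_right hX'
  · have : T * (X * Y) * T = T * X * T⁻¹ * (T * Y * T) := by group
    exact this ▸ hXY.symm.mul_right hY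

lemma CrossEquation.commute_conj (hDA : CrossEquation T D A) (hD : ReflectionEquation T D) :
    Commute (T * D * T⁻¹) (A⁻¹ * D * A) := by
  have hDA' : T * D * T⁻¹ = A⁻¹ * (T * D * T) * A := by
    calc T * D * T⁻¹ = A⁻¹ * (A * T * D) * T⁻¹ := by group
      _ = A⁻¹ * (T * D * T * A * T) * T⁻¹ := by rw [hDA]
      _ = A⁻¹ * (T * D * T) * A := by group
  rw [hDA']
  simpa only [inv_inv] using ((Commute.conj_iff A⁻¹).2 hD).symm

lemma CrossEquation.reflectionEquation_conj (hDA : CrossEquation T D A)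
    (hA : ReflectionEquation T A) (hD : ReflectionEquation T D) :
    ReflectionEquation T⁻¹ (A⁻¹ * D * A) := by
  have hAB : A * (T * A * T) * A⁻¹ = T * A * T := mul_inv_eq_of_eq_mul hA
  have hD' : A * T * D * T⁻¹ * A⁻¹ = T * D * T := by rw [← hDA]; group
  have hconj : T⁻¹ * (A⁻¹ * D * A) * T⁻¹ = A⁻¹ * (T⁻¹ * (A⁻¹ * D * A) * T⁻¹⁻¹) * A⁻¹⁻¹ := by
    calc T⁻¹ * (A⁻¹ * D * A) * T⁻¹
        = A⁻¹ * (A * (T * A * T) * A⁻¹)⁻¹ * (A * T * D * T⁻¹ * A⁻¹) * T⁻¹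
            * (T * A * T * A) * T⁻¹ := by group
      _ = A⁻¹ * (T * A * T)⁻¹ * (T * D * T) * T⁻¹ * (A * (T * A * T)) * T⁻¹ := by
        rw [hAB, hD', hA.eq]
      _ = A⁻¹ * (T⁻¹ * (A⁻¹ * D * A) * T⁻¹⁻¹) * A⁻¹⁻¹ := by group
  have hZ : Commute D (T⁻¹ * (A⁻¹ * D * A) * T⁻¹⁻¹) := by
    simpa only [mul_assoc, inv_mul_cancel_left, inv_inv, inv_mul_cancel, mul_one]
      using (hDA.commute_conj hD).conj T⁻¹
  rw [ReflectionEquation, hconj]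
  simpa only [inv_inv] using hZ.conj A⁻¹

theorem CrossEquation.reflectionEquation_moment (hDA : CrossEquation T D A)
    (hA : ReflectionEquation T A) (hD : ReflectionEquation T D) :
    ReflectionEquation T (D * A⁻¹ * D⁻¹ * A) := by
  have hA' : ReflectionEquation T (A⁻¹ * D * A)⁻¹ := by
    simpa only [inv_inv] using (hDA.reflectionEquation_conj hA hD).inv
  have := hD.mul hA' (hDA.commute_conj hD).inv_right
  simpa only [mul_inv_rev, inv_inv, mul_assoc] using this

end Group

section Matrices
open Matrix
variable {K R : Type*} [Field K] [Ring R] [Algebra K R]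

/-- The ring embedding `X ↦ X ⊗ 1` of the operators on the first leg of `R² ⊗ R²`; the basis vector
`eᵢ ⊗ eⱼ` has index `(i, j)`. -/
def legOne : Matrix (Fin 2) (Fin 2) R →+* Matrix (Fin 2 × Fin 2) (Fin 2 × Fin 2) R :=
  (compRingEquiv (Fin 2) (Fin 2) R : _ →+* _).comp (scalar (Fin 2)).mapMatrix

lemma legOne_apply (X : Matrix (Fin 2) (Fin 2) R) (a b : Fin 2 × Fin 2) :
    legOne X a b = if a.2 = b.2 then X a.1 b.1 else 0 := by
  simp [legOne, diagonal_apply]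

variable (R) in
/-- The Hecke braiding `T` of `R² ⊗ R²`: the flip composed with the standard `R`-matrix of `GL₂`. It
is written as a `2 × 2` matrix of `2 × 2` blocks, the first leg indexing the blocks, and satisfies
`(T - q) (T + q⁻¹) = 0`. -/
def braiding (q : K) : Matrix (Fin 2 × Fin 2) (Fin 2 × Fin 2) R :=
  comp _ _ _ _ R
    !![!![q • 1, 0; 0, 0], !![0, 0; 1, 0];
      !![0, 1; 0, 0], !![(q - q⁻¹) • 1, 0; 0, q • 1]]

/-- The quadratic relations of `𝒪q⁺(GL₂)`, imposed on the entries of a `2 × 2` matrix `X`. The field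
`rel_ij_kl` rewrites `X i j * X k l`. -/
structure ReflectionRelations (q : K) (X : Matrix (Fin 2) (Fin 2) R) : Prop where
  rel_01_00 : X 0 1 * X 0 0 = X 0 0 * X 0 1 + (1 - q⁻¹ ^ 2) • (X 0 1 * X 1 1)
  rel_11_00 : X 1 1 * X 0 0 = X 0 0 * X 1 1
  rel_10_00 : X 1 0 * X 0 0 = X 0 0 * X 1 0 - (1 - q⁻¹ ^ 2) • (X 1 1 * X 1 0)
  rel_11_01 : X 1 1 * X 0 1 = q ^ 2 • (X 0 1 * X 1 1)
  rel_10_01 : X 1 0 * X 0 1 = X 0 1 * X 1 0 + (1 - q⁻¹ ^ 2) • (X 0 0 * X 1 1 - X 1 1 * X 1 1)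
  rel_11_10 : X 1 1 * X 1 0 = q⁻¹ ^ 2 • (X 1 0 * X 1 1)

/-- The cross relations of `𝒟q⁺(GL₂)`, imposed on the entries of `2 × 2` matrices `D` and `A`. The
field `rel_ij_kl` rewrites `D i j * A k l`. -/
structure CrossRelations (q : K) (D A : Matrix (Fin 2) (Fin 2) R) : Prop where
  rel_00_00 : D 0 0 * A 0 0 = -((1 - q⁻¹ ^ 2) • (D 0 1 * A 1 0)) + q⁻¹ ^ 2 • (A 0 0 * D 0 0)
        + (q⁻¹ ^ 2 - q⁻¹ ^ 4) • (A 0 1 * D 1 0)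
  rel_00_01 : D 0 0 * A 0 1 = (q⁻¹ ^ 2 - 1) • (D 0 1 * A 1 1) + q⁻¹ ^ 2 • (A 0 1 * D 0 0)
  rel_00_10 : D 0 0 * A 1 0 = (1 - q ^ 2) • (D 1 0 * A 0 0) - (q - q⁻¹) ^ 2 • (D 1 1 * A 1 0)
        + A 1 0 * D 0 0 + (1 - q⁻¹ ^ 2) • (A 1 1 * D 1 0)
  rel_00_11 : D 0 0 * A 1 1 = (1 - q ^ 2) • (D 1 0 * A 0 1) - (q - q⁻¹) ^ 2 • (D 1 1 * A 1 1)
        + A 1 1 * D 0 0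
  rel_01_00 : D 0 1 * A 0 0 = A 0 0 * D 0 1 + (1 - q⁻¹ ^ 2) • (A 0 1 * D 1 1)
        + (q⁻¹ ^ 2 - 1) • (A 0 1 * D 0 0)
  rel_01_01 : D 0 1 * A 0 1 = q⁻¹ ^ 2 • (A 0 1 * D 0 1)
  rel_01_10 : D 0 1 * A 1 0 = (q⁻¹ ^ 2 - 1) • (D 1 1 * A 0 0) + A 1 0 * D 0 1
        + (q⁻¹ ^ 2 - 1) • (A 1 1 * D 0 0) + (1 - q⁻¹ ^ 2) • (A 1 1 * D 1 1)
  rel_01_11 : D 0 1 * A 1 1 = (q⁻¹ ^ 2 - 1) • (D 1 1 * A 0 1) + q⁻¹ ^ 2 • (A 1 1 * D 0 1)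
  rel_10_00 : D 1 0 * A 0 0 = q⁻¹ ^ 2 • (A 0 0 * D 1 0) - (1 - q⁻¹ ^ 2) • (D 1 1 * A 1 0)
  rel_10_01 : D 1 0 * A 0 1 = (q⁻¹ ^ 2 - 1) • (D 1 1 * A 1 1) + A 0 1 * D 1 0
  rel_10_10 : D 1 0 * A 1 0 = q⁻¹ ^ 2 • (A 1 0 * D 1 0)
  rel_10_11 : D 1 0 * A 1 1 = A 1 1 * D 1 0
  rel_11_00 : D 1 1 * A 0 0 = A 0 0 * D 1 1 + (1 - q ^ 2) • (A 0 1 * D 1 0)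
  rel_11_01 : D 1 1 * A 0 1 = A 0 1 * D 1 1
  rel_11_10 : D 1 1 * A 1 0 = q⁻¹ ^ 2 • (A 1 0 * D 1 1) + (q⁻¹ ^ 2 - 1) • (A 1 1 * D 1 0)
  rel_11_11 : D 1 1 * A 1 1 = q⁻¹ ^ 2 • (A 1 1 * D 1 1)

lemma braiding_mul_legOne_mul_braiding (q : K) (X : Matrix (Fin 2) (Fin 2) R) :
    braiding R q * legOne X * braiding R q = comp _ _ _ _ R
      !![!![q ^ 2 • X 0 0, q • X 0 1; q • X 1 0, X 1 1],
          !![((q - q⁻¹) * q) • X 0 1, 0; (q - q⁻¹) • X 1 1, 0];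
        !![((q - q⁻¹) * q) • X 1 0, (q - q⁻¹) • X 1 1; 0, 0],
          !![X 0 0 + (q - q⁻¹) ^ 2 • X 1 1, q • X 0 1; q • X 1 0, q ^ 2 • X 1 1]] := by
  simp only [← Matrix.ext_iff, Prod.forall, Fin.forall_fin_two, mul_apply, Fintype.sum_prod_type,
    Fin.sum_univ_two, legOne_apply, braiding, comp_apply, of_apply, cons_val, reduceIte,
    one_ne_zero, zero_ne_one, zero_mul, mul_zero, add_zero, zero_add, mul_one, one_mul,
    smul_mul_assoc, mul_smul_comm, smul_smul, smul_zero, and_self, ← pow_two, mul_comm q]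

lemma reflectionEquation_braiding_iff {q : K} (hq : q ≠ 0) {X : Matrix (Fin 2) (Fin 2) R} :
    ReflectionEquation (braiding R q) (legOne X) ↔ ReflectionRelations q X := by
  simp only [ReflectionEquation, Commute, SemiconjBy, braiding_mul_legOne_mul_braiding,
    ← Matrix.ext_iff, Prod.forall, Fin.forall_fin_two, mul_apply, Fintype.sum_prod_type,
    Fin.sum_univ_two, legOne_apply, comp_apply, of_apply, cons_val, reduceIte, one_ne_zero,
    zero_ne_one, zero_mul, mul_zero, add_zero, zero_add, mul_add, add_mul, smul_mul_assoc,
    mul_smul_comm, smul_zero, true_and, and_true]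
  constructor
  · rintro ⟨⟨⟨h₁, -⟩, ⟨h₃, h₂⟩, h₅, h₄⟩, -, h₆, -⟩
    constructor
    · linear_combination (norm := (match_scalars <;> field)) -(q⁻¹ • h₁)
    · exact h₂.symm
    · linear_combination (norm := (match_scalars <;> field)) -(q⁻¹ • h₃)
    · exact h₄.symm
    · linear_combination (norm := (match_scalars <;> field)) -(q⁻¹ • h₅)
    · linear_combination (norm := (match_scalars <;> field)) -(q⁻¹ ^ 2 • h₆)
  · rintro ⟨h₁, h₂, h₃, h₄, h₅, h₆⟩
    refine ⟨⟨⟨?_, ?_⟩, ⟨?_, ?_⟩, ?_, ?_⟩, ⟨⟨?_, ?_⟩, ?_, ?_⟩, ?_, ?_⟩ <;>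
    simp only [h₁, h₂, h₃, h₄, h₅, h₆] <;> match_scalars <;> field

lemma CrossRelations.crossEquation {q : K} (hq : q ≠ 0) {D A : Matrix (Fin 2) (Fin 2) R}
    (h : CrossRelations q D A) : CrossEquation (braiding R q) (legOne D) (legOne A) := by
  obtain ⟨c1, c2, c3, c4, c5, c6, c7, c8, c9, c10, c11, c12, c13, c14, c15, c16⟩ := h
  rw [CrossEquation, braiding_mul_legOne_mul_braiding]
  simp only [← Matrix.ext_iff, Prod.forall, Fin.forall_fin_two, mul_apply, Fintype.sum_prod_type,
    Fin.sum_univ_two, legOne_apply, braiding, comp_apply, of_apply, cons_val, reduceIte,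
    one_ne_zero, zero_ne_one, zero_mul, mul_zero, add_zero, zero_add, mul_one, add_mul,
    smul_mul_assoc, mul_smul_comm, c1, c2, c3, c4, c5, c6, c7, c8, c9, c10, c11, c12,
    c13, c14, c15, c16]
  refine ⟨⟨⟨⟨?_, ?_⟩, ?_, ?_⟩, ⟨?_, ?_⟩, ?_, ?_⟩,
    ⟨⟨?_, ?_⟩, ?_, ?_⟩, ⟨?_, ?_⟩, ?_, ?_⟩ <;>
  match_scalars <;> field

lemma braiding_mul_self {q : K} (hq : q ≠ 0) :
    braiding R q * braiding R q = (q - q⁻¹) • braiding R q + 1 := by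
  simp only [← Matrix.ext_iff, Prod.forall, Fin.forall_fin_two, mul_apply, Fintype.sum_prod_type,
    Fin.sum_univ_two, braiding, comp_apply, of_apply, cons_val, Matrix.add_apply, Matrix.smul_apply,
    one_apply, Prod.mk.injEq, one_ne_zero, zero_ne_one, and_self, and_true, true_and, and_false,
    reduceIte, zero_mul, mul_zero, one_mul, mul_one, smul_mul_assoc, smul_zero, add_zero, zero_add]
  refine ⟨?_, ?_, ?_⟩ <;> match_scalars <;> field

lemma isUnit_braiding {q : K} (hq : q ≠ 0) : IsUnit (braiding R q) := by
  refine isUnit_iff_exists.2 ⟨braiding R q - (q - q⁻¹) • 1, ?_, ?_⟩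
  · rw [mul_sub, braiding_mul_self hq, mul_smul_comm, mul_one, add_sub_cancel_left]
  · rw [sub_mul, braiding_mul_self hq, smul_mul_assoc, one_mul, add_sub_cancel_left]

theorem ReflectionRelations.moment {q : K} (hq : q ≠ 0) {D A : (Matrix (Fin 2) (Fin 2) R)ˣ}
    (hD : ReflectionRelations q D.val) (hA : ReflectionRelations q A.val)
    (hDA : CrossRelations q D.val A.val) :
    ReflectionRelations q (D * A⁻¹ * D⁻¹ * A).val := by
  obtain ⟨T, hT⟩ := isUnit_braiding (R := R) hq
  let leg := Units.map (legOne (R := R)).toMonoidHom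
  have reflection_iff (X : (Matrix (Fin 2) (Fin 2) R)ˣ) :
      ReflectionEquation T (leg X) ↔ ReflectionRelations q X.val := by
    rw [← reflectionEquation_braiding_iff hq, ← hT]
    exact Commute.units_val_iff.symm
  have hcross : CrossEquation T (leg D) (leg A) := by
    have := hDA.crossEquation hq
    rw [← hT] at this
    exact Units.ext this
  rw [← reflection_iff] at hD hA ⊢
  simpa only [map_mul, map_inv] using hcross.reflectionEquation_moment hA hD

/-- The quantum determinant of a `2 × 2` matrix. -/
def qdet (q : K) (X : Matrix (Fin 2) (Fin 2) R) : R :=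
  X 0 0 * X 1 1 - q ^ 2 • (X 0 1 * X 1 0)

/-- The quantum adjugate of a `2 × 2` matrix, a two-sided inverse up to the quantum determinant for
solutions of `ReflectionRelations`. -/
def qadj (q : K) (X : Matrix (Fin 2) (Fin 2) R) : Matrix (Fin 2) (Fin 2) R :=
  !![X 1 1, -(q ^ 2 • X 0 1); -(q ^ 2 • X 1 0), q ^ 2 • X 0 0 + (1 - q ^ 2) • X 1 1]

namespace ReflectionRelations

variable {q : K} {X : Matrix (Fin 2) (Fin 2) R}

lemma qadj_mul (hq : q ≠ 0) (h : ReflectionRelations q X) :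
    qadj q X * X = scalar (Fin 2) (qdet q X) := by
  obtain ⟨-, h₂, h₃, h₄, h₅, h₆⟩ := h
  simp only [← Matrix.ext_iff, Fin.forall_fin_two, mul_apply, Fin.sum_univ_two, qadj, qdet,
    scalar_apply, diagonal_apply, of_apply, cons_val, reduceIte, one_ne_zero, zero_ne_one,
    add_mul, neg_mul, smul_mul_assoc, h₂, h₃, h₄, h₅, h₆]
  refine ⟨⟨?_, ?_⟩, ?_, ?_⟩ <;> match_scalars <;> field

lemma mul_qadj (hq : q ≠ 0) (h : ReflectionRelations q X) :
    X * qadj q X = scalar (Fin 2) (qdet q X) := by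
  obtain ⟨h₁, h₂, -, -, h₅, h₆⟩ := h
  simp only [← Matrix.ext_iff, Fin.forall_fin_two, mul_apply, Fin.sum_univ_two, qadj, qdet,
    scalar_apply, diagonal_apply, of_apply, cons_val, reduceIte, one_ne_zero, zero_ne_one,
    mul_add, mul_neg, mul_smul_comm, h₁, h₂, h₅, h₆]
  refine ⟨⟨?_, ?_⟩, ?_, ?_⟩ <;> match_scalars <;> field

lemma smul_qadj_mul (hq : q ≠ 0) (h : ReflectionRelations q X) {d : R}
    (hd : d * qdet q X = 1) : d • qadj q X * X = 1 := by
  rw [Matrix.smul_mul, h.qadj_mul hq, scalar_apply, ← diagonal_smul]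
  simp only [Pi.smul_def, smul_eq_mul, hd, diagonal_one]

lemma mul_smul_qadj (hq : q ≠ 0) (h : ReflectionRelations q X) {d : R}
    (hd : d * qdet q X = 1) (hd' : qdet q X * d = 1) : X * d • qadj q X = 1 := by
  have hright : X * (qadj q X * scalar (Fin 2) d) = 1 := by
    rw [← mul_assoc, h.mul_qadj hq, ← map_mul, hd', map_one]
  rwa [← left_inv_eq_right_inv (h.smul_qadj_mul hq hd) hright] at hright

end ReflectionRelations

variable (R) in
/-- The `q`-antisymmetric vector `e₁ ⊗ e₂ - q⁻¹ e₂ ⊗ e₁`, which spans the image of `T - q` for the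
braiding `T`. -/
def qAlt (q : K) : Fin 2 × Fin 2 → R :=
  Function.uncurry ![![0, 1], ![-(q⁻¹ • 1), 0]]

lemma braiding_sub_mulVec {q : K} (hq : q ≠ 0) (u : Fin 2 × Fin 2 → R) :
    (braiding R q - q • 1) *ᵥ u = MulOpposite.op (u (1, 0) - q • u (0, 1)) • qAlt R q := by
  simp only [funext_iff, Prod.forall, Fin.forall_fin_two, mulVec, dotProduct,
    Fintype.sum_prod_type, Fin.sum_univ_two, braiding, Matrix.sub_apply, comp_apply, of_apply,
    cons_val, Matrix.smul_apply, one_apply, qAlt, Function.uncurry, Pi.smul_apply, op_smul_eq_mul,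
    Prod.mk.injEq, one_ne_zero, zero_ne_one, and_true, true_and, and_false, reduceIte, zero_mul,
    one_mul, smul_zero, add_zero, zero_add, sub_zero, zero_sub, sub_self, neg_mul, sub_mul,
    smul_mul_assoc]
  constructor <;> match_scalars <;> field

/-- The scalar by which a matrix commuting with the braiding acts on `qAlt`, read off from the
coordinate `(0, 1)`, at which `qAlt` is `1`. -/
def qAltCoeff (q : K) (W : Matrix (Fin 2 × Fin 2) (Fin 2 × Fin 2) R) : R :=
  (W *ᵥ qAlt R q) (0, 1)

lemma op_smul_qAlt_apply (q : K) (r : R) : (MulOpposite.op r • qAlt R q) (0, 1) = r := by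
  simp [qAlt]

lemma mulVec_qAlt {q : K} (hq : q ≠ 0) {W : Matrix (Fin 2 × Fin 2) (Fin 2 × Fin 2) R}
    (hW : Commute (braiding R q) W) :
    W *ᵥ qAlt R q = MulOpposite.op (qAltCoeff q W) • qAlt R q := by
  have hqAlt : qAlt R q = (braiding R q - q • 1) *ᵥ Pi.single (1, 0) 1 := by
    simp [braiding_sub_mulVec hq]
  have hcomm : Commute (braiding R q - q • 1) W :=
    hW.sub_left ((Commute.one_left W).smul_left q)
  obtain ⟨r, hr⟩ : ∃ r, W *ᵥ qAlt R q = MulOpposite.op r • qAlt R q := by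
    rw [hqAlt, mulVec_mulVec, ← hcomm.eq, ← mulVec_mulVec, braiding_sub_mulVec hq, ← hqAlt]
    exact ⟨_, rfl⟩
  rw [qAltCoeff, hr, op_smul_qAlt_apply]

lemma qAltCoeff_mul {q : K} (hq : q ≠ 0) (V : Matrix (Fin 2 × Fin 2) (Fin 2 × Fin 2) R)
    {W : Matrix (Fin 2 × Fin 2) (Fin 2 × Fin 2) R} (hW : Commute (braiding R q) W) :
    qAltCoeff q (V * W) = qAltCoeff q V * qAltCoeff q W := by
  rw [qAltCoeff, ← mulVec_mulVec, mulVec_qAlt hq hW, mulVec_smul, Pi.smul_apply, op_smul_eq_mul,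
    ← qAltCoeff]

lemma qAltCoeff_one (q : K) :
    qAltCoeff q (1 : Matrix (Fin 2 × Fin 2) (Fin 2 × Fin 2) R) = 1 := by
  simp [qAltCoeff, qAlt]

lemma isUnit_qAltCoeff {q : K} (hq : q ≠ 0) {W : Matrix (Fin 2 × Fin 2) (Fin 2 × Fin 2) R}
    (hW : Commute (braiding R q) W) (hunit : IsUnit W) : IsUnit (qAltCoeff q W) := by
  obtain ⟨W, rfl⟩ := hunit
  refine isUnit_iff_exists.2 ⟨qAltCoeff q W⁻¹.val, ?_, ?_⟩
  · rw [← qAltCoeff_mul hq _ hW.units_inv_right, W.mul_inv, qAltCoeff_one]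
  · rw [← qAltCoeff_mul hq _ hW, W.inv_mul, qAltCoeff_one]

lemma sq_smul_qAltCoeff_legOne_mul {q : K} (hq : q ≠ 0) (X : Matrix (Fin 2) (Fin 2) R) :
    q ^ 2 • qAltCoeff q (legOne X * (braiding R q * legOne X * braiding R q)) = qdet q X := by
  rw [braiding_mul_legOne_mul_braiding]
  simp only [qAltCoeff, mulVec, dotProduct, mul_apply, Fintype.sum_prod_type, Fin.sum_univ_two,
    legOne_apply, comp_apply, of_apply, cons_val, qAlt, Function.uncurry, reduceIte, one_ne_zero,
    zero_mul, mul_zero, add_zero, zero_add, mul_one, mul_neg, mul_smul_comm, qdet]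
  match_scalars <;> field

theorem ReflectionRelations.isUnit_qdet {q : K} (hq : q ≠ 0) {X : Matrix (Fin 2) (Fin 2) R}
    (h : ReflectionRelations q X) (hX : IsUnit X) : IsUnit (qdet q X) := by
  have hunit := isUnit_braiding (R := R) hq
  have hlegOne : IsUnit (legOne X) := hX.map legOne
  have hcoeff := isUnit_qAltCoeff hq ((reflectionEquation_braiding_iff hq).2 h).commute_mul
    (hlegOne.mul ((hunit.mul hlegOne).mul hunit))
  rw [← sq_smul_qAltCoeff_legOne_mul hq]
  exact hcoeff.smul (Units.mk0 (q ^ 2) (pow_ne_zero 2 hq))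

end Matrices

namespace OqGL2

variable {B : Type*} [Ring B] [Algebra ℂ B] {q : ℂ}

/-- The images of the generators of `𝒪q(GL₂)` under the homomorphism that sends the matrix of
generators to `X` and the inverse of the quantum determinant to `d`. -/
def genImage (X : Matrix (Fin 2) (Fin 2) B) (d : B) : OGen → B
  | .l11 => X 0 0
  | .l12 => X 0 1
  | .l21 => X 1 0
  | .l22 => X 1 1
  | .li => d

lemma lift_genImage_eq_of_rel {X : Matrix (Fin 2) (Fin 2) B} (hX : ReflectionRelations q X)
    {d : B} (hd : d * qdet q X = 1) (hd' : qdet q X * d = 1) ⦃x y : FO⦄ (h : ORel q x y) :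
    FreeAlgebra.lift ℂ (genImage X d) x = FreeAlgebra.lift ℂ (genImage X d) y := by
  obtain ⟨h₁, h₂, h₃, h₄, h₅, h₆⟩ := hX
  cases h <;> simp only [gO, map_mul, map_add, map_sub, map_smul, map_one,
    FreeAlgebra.lift_ι_apply, genImage] <;> assumption

lemma qdet_Lmat (q : ℂ) : qdet q (Lmat q) = RingQuot.mkAlgHom ℂ (ORel q)
    (gO .l11 * gO .l22 - q ^ 2 • (gO .l12 * gO .l21)) := by
  simp only [qdet, Lmat, Matrix.of_apply, Matrix.cons_val, map_sub, map_mul, map_smul]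

lemma li_mul_qdet_Lmat (q : ℂ) :
    RingQuot.mkAlgHom ℂ (ORel q) (gO .li) * qdet q (Lmat q) = 1 := by
  rw [qdet_Lmat, ← map_mul, RingQuot.mkAlgHom_rel ℂ .inv1, map_one]

lemma qdet_Lmat_mul_li (q : ℂ) :
    qdet q (Lmat q) * RingQuot.mkAlgHom ℂ (ORel q) (gO .li) = 1 := by
  rw [qdet_Lmat, ← map_mul, RingQuot.mkAlgHom_rel ℂ .inv2, map_one]

theorem algHom_ext {μ ν : OqGL2 q →ₐ[ℂ] B}
    (h : ∀ i j, μ (Lmat q i j) = ν (Lmat q i j)) : μ = ν := by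
  let mk := RingQuot.mkAlgHom ℂ (ORel q)
  have hdet : μ (qdet q (Lmat q)) = ν (qdet q (Lmat q)) := by
    simp only [qdet, map_sub, map_mul, map_smul, h]
  have hμ : μ (mk (gO .li)) * μ (qdet q (Lmat q)) = 1 := by
    rw [← map_mul, li_mul_qdet_Lmat, map_one]
  have hν : μ (qdet q (Lmat q)) * ν (mk (gO .li)) = 1 := by
    rw [hdet, ← map_mul, qdet_Lmat_mul_li, map_one]
  refine RingQuot.ringQuot_ext' ℂ _ _ (FreeAlgebra.hom_ext (funext fun g => ?_))
  cases g with
  | l11 => exact h 0 0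
  | l12 => exact h 0 1
  | l21 => exact h 1 0
  | l22 => exact h 1 1
  | li => exact left_inv_eq_right_inv hμ hν

theorem existsUnique_algHom {X : Matrix (Fin 2) (Fin 2) B} (hX : ReflectionRelations q X)
    (hdet : IsUnit (qdet q X)) :
    ∃! μ : OqGL2 q →ₐ[ℂ] B, ∀ i j, μ (Lmat q i j) = X i j := by
  obtain ⟨d, hd', hd⟩ := isUnit_iff_exists.1 hdet
  let lift : OqGL2 q →ₐ[ℂ] B := RingQuot.liftAlgHom ℂ
    ⟨FreeAlgebra.lift ℂ (genImage X d), lift_genImage_eq_of_rel hX hd hd'⟩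
  have hlift : ∀ i j, lift (Lmat q i j) = X i j := by
    simp [lift, Fin.forall_fin_two, Lmat, gO, genImage]
  exact ⟨lift, hlift, fun μ hμ => algHom_ext fun i j => (hμ i j).trans (hlift i j).symm⟩

end OqGL2

lemma reflectionRelations_Amat (q : ℂ) : ReflectionRelations q (Amat q) := by
  constructor <;>
  simp only [Amat, Matrix.of_apply, Matrix.cons_val, a11, a12, a21, a22, ← map_mul, ← map_add,
    ← map_sub, ← map_smul]
  exacts [RingQuot.mkAlgHom_rel ℂ .a1, RingQuot.mkAlgHom_rel ℂ .a2, RingQuot.mkAlgHom_rel ℂ .a3,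
    RingQuot.mkAlgHom_rel ℂ .a4, RingQuot.mkAlgHom_rel ℂ .a5, RingQuot.mkAlgHom_rel ℂ .a6]

lemma reflectionRelations_Dmat (q : ℂ) : ReflectionRelations q (Dmat q) := by
  constructor <;>
  simp only [Dmat, Matrix.of_apply, Matrix.cons_val, p11, p12, p21, p22, ← map_mul, ← map_add,
    ← map_sub, ← map_smul]
  exacts [RingQuot.mkAlgHom_rel ℂ .p1, RingQuot.mkAlgHom_rel ℂ .p2, RingQuot.mkAlgHom_rel ℂ .p3,
    RingQuot.mkAlgHom_rel ℂ .p4, RingQuot.mkAlgHom_rel ℂ .p5, RingQuot.mkAlgHom_rel ℂ .p6]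

lemma crossRelations_Dmat_Amat (q : ℂ) : CrossRelations q (Dmat q) (Amat q) := by
  constructor <;>
  simp only [Amat, Dmat, Matrix.of_apply, Matrix.cons_val, a11, a12, a21, a22, p11, p12, p21, p22,
    ← map_mul, ← map_add, ← map_sub, ← map_neg, ← map_smul] <;>
  exact RingQuot.mkAlgHom_rel ℂ (by constructor)

lemma qdet_Amat (q : ℂ) : qdet q (Amat q) = RingQuot.mkAlgHom ℂ (QLRel q)
    (gQL .a11 * gQL .a22 - q ^ 2 • (gQL .a12 * gQL .a21)) := by
  simp only [qdet, Amat, a11, a12, a21, a22, Matrix.of_apply, Matrix.cons_val, map_sub, map_mul,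
    map_smul]

lemma qdet_Dmat (q : ℂ) : qdet q (Dmat q) = RingQuot.mkAlgHom ℂ (QLRel q)
    (gQL .p11 * gQL .p22 - q ^ 2 • (gQL .p12 * gQL .p21)) := by
  simp only [qdet, Dmat, p11, p12, p21, p22, Matrix.of_apply, Matrix.cons_val, map_sub, map_mul,
    map_smul]

lemma ai_mul_qdet_Amat (q : ℂ) : ai q * qdet q (Amat q) = 1 := by
  rw [qdet_Amat, ai, ← map_mul, RingQuot.mkAlgHom_rel ℂ .invA1, map_one]

lemma qdet_Amat_mul_ai (q : ℂ) : qdet q (Amat q) * ai q = 1 := by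
  rw [qdet_Amat, ai, ← map_mul, RingQuot.mkAlgHom_rel ℂ .invA2, map_one]

lemma di_mul_qdet_Dmat (q : ℂ) : di q * qdet q (Dmat q) = 1 := by
  rw [qdet_Dmat, di, ← map_mul, RingQuot.mkAlgHom_rel ℂ .invD1, map_one]

lemma qdet_Dmat_mul_di (q : ℂ) : qdet q (Dmat q) * di q = 1 := by
  rw [qdet_Dmat, di, ← map_mul, RingQuot.mkAlgHom_rel ℂ .invD2, map_one]

/-- The matrix `A` as a unit of the matrix ring over `𝒟q(GL₂)`, with inverse `det_q(A)⁻¹ Ã`. -/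
def unitA {q : ℂ} (hq : q ≠ 0) : (Matrix (Fin 2) (Fin 2) (DqLoc q))ˣ where
  val := Amat q
  inv := Ainv q
  val_inv := (reflectionRelations_Amat q).mul_smul_qadj hq (ai_mul_qdet_Amat q) (qdet_Amat_mul_ai q)
  inv_val := (reflectionRelations_Amat q).smul_qadj_mul hq (ai_mul_qdet_Amat q)

/-- The matrix `D` as a unit of the matrix ring over `𝒟q(GL₂)`, with inverse `det_q(D)⁻¹ D̃`. -/
def unitD {q : ℂ} (hq : q ≠ 0) : (Matrix (Fin 2) (Fin 2) (DqLoc q))ˣ where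
  val := Dmat q
  inv := Dinv q
  val_inv := (reflectionRelations_Dmat q).mul_smul_qadj hq (di_mul_qdet_Dmat q) (qdet_Dmat_mul_di q)
  inv_val := (reflectionRelations_Dmat q).smul_qadj_mul hq (di_mul_qdet_Dmat q)

/-- There is a ℂ-algebra homomorphism `μ_q : 𝒪q(GL₂) → 𝒟q(GL₂)`, the
quantum moment map, determined by sending each generator `ℓ^i_j` to the
`(i,j)`-entry of the matrix `D·A⁻¹·D⁻¹·A` over `𝒟q(GL₂)`, where
`A⁻¹ = det_q(A)⁻¹Ã` and `D⁻¹ = det_q(D)⁻¹D̃`. -/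
theorem stmt15 (q : ℂ) (hq : q ≠ 0) :
    ∃! μ : OqGL2 q →ₐ[ℂ] DqLoc q,
      ∀ i j : Fin 2, μ (Lmat q i j) = (Dmat q * Ainv q * Dinv q * Amat q) i j := by
  let M := unitD hq * (unitA hq)⁻¹ * (unitD hq)⁻¹ * unitA hq
  have hM : ReflectionRelations q M.val :=
    ReflectionRelations.moment hq (reflectionRelations_Dmat q) (reflectionRelations_Amat q)
      (crossRelations_Dmat_Amat q)
  exact OqGL2.existsUnique_algHom hM (hM.isUnit_qdet hq M.isUnit)
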